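/- Let p be a probability density on ℝ^d, and let q_{σ0} : ℝ^d × ℝ^d → ℝ be a kernel such that q_{σ0}(x̃|x) > 0 for all x, x̃, for each fixed x the map x̃ ↦ q_{σ0}(x̃|x) is a differentiable probability density, and the smoothed density p_{σ0}(x̃) = ∫ q_{σ0}(x̃|x) p(x) dx is positive, differentiable, and satisfies ∇_{x̃} p_{σ0}(x̃) = ∫ p(x) ∇_{x̃} q_{σ0}(x̃|x) dx for all x̃. For a measurable model score g : ℝ^d → ℝ^d define L_SM(g) = ∫ p_{σ0}(x̃) ‖∇ log p_{σ0}(x̃) + g(x̃)‖² dx̃ and L_DSM(g) = ∫∫ p(x) q_{σ0}(x̃|x) ‖∇_{x̃} log q_{σ0}(x̃|x) + g(x̃)‖² dx dx̃. Then for any two model scores g₁, g₂ for which all four integrals are finite, L_SM(g₁) − L_SM(g₂) = L_DSM(g₁) − L_DSM(g₂); that is, the score matching and denoising score matching objectives differ by a constant independent of the model score. -/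

import Mathlib

/-!
Write `r(x, y) = p(x) q(y|x)`, `s = ∇_y log q` and `S = ∇ log p0`. Since `a ↦ ‖a + g₁‖² - ‖a + g₂‖²`
is affine, namely `2⟪a, g₁ - g₂⟫ + ‖g₁‖² - ‖g₂‖²`, the differences of the two objectives only see
the zeroth and first moments of the scores. For fixed `y` these agree: `∫ r dx = p0` and
`∫ r s dx = ∫ p ∇q dx = ∇p0 = p0 S`. Integrating in `y` (Fubini) gives the theorem.

The kernel is not assumed jointly measurable. Joint integrability is only used for the DSM
integrands, where it is a hypothesis. For fixed `y`, positivity of `p0 y` forces `x ↦ q(y|x) p(x)`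
to be integrable (otherwise its Bochner integral would be `0`), so `x ↦ p(x) ∇q(y|x)` is
a.e.-measurable as a limit of difference quotients (`aestronglyMeasurable_smul_gradient`).
It is integrable for a.e. `y` because `t ≤ 1 + t²` bounds `r ‖s + g₁‖` by `r + r ‖s + g₁‖²`.
-/

open MeasureTheory

theorem gradient_log {E : Type*} [NormedAddCommGroup E] [InnerProductSpace ℝ E] [CompleteSpace E]
    {f : E → ℝ} {x : E} (hf : DifferentiableAt ℝ f x) (hx : f x ≠ 0) :
    gradient (fun y => Real.log (f y)) x = (f x)⁻¹ • gradient f x := by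
  apply HasGradientAt.gradient
  have h := hf.hasGradientAt.hasFDerivAt.log hx
  rw [hasGradientAt_iff_hasFDerivAt, map_smul]
  exact h

/-- Each directional derivative is a pointwise limit of difference quotients, so no joint
measurability of `q` is needed. -/
theorem aestronglyMeasurable_smul_gradient {X : Type*} [MeasurableSpace X] {μ : Measure X} {d : ℕ}
    {p : X → ℝ} {q : EuclideanSpace ℝ (Fin d) → X → ℝ}
    (hq_diff : ∀ x, Differentiable ℝ (fun y => q y x))
    (hm : ∀ y, AEStronglyMeasurable (fun x => q y x * p x) μ)
    (y : EuclideanSpace ℝ (Fin d)) :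
    AEStronglyMeasurable (fun x => p x • gradient (fun y => q y x) y) μ := by
  have hdir : ∀ v : EuclideanSpace ℝ (Fin d), AEStronglyMeasurable
      (fun x => inner ℝ v (p x • gradient (fun y => q y x) y)) μ := by
    intro v
    refine aestronglyMeasurable_of_tendsto_ae Filter.atTop
      (f := fun (n : ℕ) x => (n : ℝ) * (q (y + (n : ℝ)⁻¹ • v) x * p x - q y x * p x))
      (fun n => ((hm _).sub (hm _)).const_mul _) (Filter.Eventually.of_forall fun x => ?_)
    have h := (hq_diff x y).hasGradientAt.hasFDerivAt.lim v
      (c := fun n : ℕ => (n : ℝ)) (l := Filter.atTop)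
      (by simpa using tendsto_natCast_atTop_atTop (R := ℝ))
    have h2 := h.mul_const (p x)
    convert h2 using 1
    · ext n
      simp only [smul_eq_mul]
      ring
    · simp only [inner_smul_right, InnerProductSpace.toDual_apply_apply]
      rw [real_inner_comm, mul_comm]
  have hsum : (fun x => p x • gradient (fun y => q y x) y) = fun x =>
      ∑ i, inner ℝ (EuclideanSpace.basisFun (Fin d) ℝ i) (p x • gradient (fun y => q y x) y) •
        EuclideanSpace.basisFun (Fin d) ℝ i := by
    ext1 x
    exact ((EuclideanSpace.basisFun (Fin d) ℝ).sum_repr' _).symm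
  rw [hsum]
  exact Finset.aestronglyMeasurable_fun_sum _ fun i _ => (hdir _).smul_const _

theorem norm_add_sq_sub_norm_add_sq {E : Type*} [NormedAddCommGroup E] [InnerProductSpace ℝ E]
    (a b c : E) :
    ‖a + b‖ ^ 2 - ‖a + c‖ ^ 2 = 2 * inner ℝ (b - c) a + (‖b‖ ^ 2 - ‖c‖ ^ 2) := by
  rw [norm_add_sq_real, norm_add_sq_real, inner_sub_left, real_inner_comm a b,
    real_inner_comm a c]
  ring

/-- A weighted second moment controls the weighted first moment, by `t ≤ 1 + t²`. Only the
weighted field `w • s` has to be a.e.-measurable. -/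
theorem integrable_smul_of_integrable_mul_norm_sq {X E : Type*} [MeasurableSpace X]
    {μ : Measure X} [NormedAddCommGroup E] [NormedSpace ℝ E] {w : X → ℝ} {s : X → E} (b : E)
    (hw : ∀ x, 0 ≤ w x) (hwi : Integrable w μ)
    (hs : AEStronglyMeasurable (fun x => w x • s x) μ)
    (h2 : Integrable (fun x => w x * ‖s x + b‖ ^ 2) μ) :
    Integrable (fun x => w x • s x) μ := by
  have hwb : Integrable (fun x => w x • b) μ := hwi.smul_const b
  have hsum : Integrable (fun x => w x • s x + w x • b) μ := by
    refine (hwi.add h2).mono' (hs.add hwb.aestronglyMeasurable)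
      (Filter.Eventually.of_forall fun x => ?_)
    rw [← smul_add, norm_smul, Real.norm_of_nonneg (hw x), Pi.add_apply]
    nlinarith [mul_nonneg (hw x) (sq_nonneg (‖s x + b‖ - 1)),
      mul_nonneg (hw x) (sq_nonneg ‖s x + b‖), hw x]
  exact (hsum.sub hwb).congr (Filter.Eventually.of_forall fun x => by simp)

/-- (Vincent's equivalence.) Under differentiation-under-the-integral
for the smoothed density `p0(xt) = ∫ q(xt|x) p(x) dx`, the score matching objective
`L_SM(g) = ∫ p0(xt) ‖∇ log p0(xt) + g(xt)‖² dxt` and the denoising score matching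
objective `L_DSM(g) = ∫∫ p(x) q(xt|x) ‖∇_{xt} log q(xt|x) + g(xt)‖² dx dxt`
differ by a constant independent of the model score `g`. -/
theorem sm_eq_dsm_up_to_const
    (d : ℕ) (hd : 0 < d)
    (p : EuclideanSpace ℝ (Fin d) → ℝ)
    (hp_meas : Measurable p) (hp_nonneg : ∀ x, 0 ≤ p x) (hp_int : ∫ x, p x = 1)
    (q : EuclideanSpace ℝ (Fin d) → EuclideanSpace ℝ (Fin d) → ℝ)
    -- `q xt x` is the kernel `q_{σ₀}(xt | x)`
    (hq_pos : ∀ xt x, 0 < q xt x)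
    (hq_diff : ∀ x, Differentiable ℝ (fun xt => q xt x))
    (hq_density : ∀ x, ∫ xt, q xt x = 1)
    (p0 : EuclideanSpace ℝ (Fin d) → ℝ)
    (hp0_def : ∀ xt, p0 xt = ∫ x, q xt x * p x)
    (hp0_pos : ∀ xt, 0 < p0 xt)
    (hp0_grad : ∀ xt, HasGradientAt p0
      (∫ x, p x • gradient (fun y => q y x) xt) xt)
    (g₁ g₂ : EuclideanSpace ℝ (Fin d) → EuclideanSpace ℝ (Fin d))
    (hg₁ : Measurable g₁) (hg₂ : Measurable g₂)
    (hSM₁ : Integrable (fun xt =>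
      p0 xt * ‖gradient (fun y => Real.log (p0 y)) xt + g₁ xt‖ ^ 2))
    (hSM₂ : Integrable (fun xt =>
      p0 xt * ‖gradient (fun y => Real.log (p0 y)) xt + g₂ xt‖ ^ 2))
    (hDSM₁ : Integrable (fun z : EuclideanSpace ℝ (Fin d) × EuclideanSpace ℝ (Fin d) =>
      p z.1 * q z.2 z.1 *
        ‖gradient (fun y => Real.log (q y z.1)) z.2 + g₁ z.2‖ ^ 2))
    (hDSM₂ : Integrable (fun z : EuclideanSpace ℝ (Fin d) × EuclideanSpace ℝ (Fin d) =>
      p z.1 * q z.2 z.1 *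
        ‖gradient (fun y => Real.log (q y z.1)) z.2 + g₂ z.2‖ ^ 2)) :
    (∫ xt, p0 xt * ‖gradient (fun y => Real.log (p0 y)) xt + g₁ xt‖ ^ 2) -
      (∫ xt, p0 xt * ‖gradient (fun y => Real.log (p0 y)) xt + g₂ xt‖ ^ 2) =
    (∫ z : EuclideanSpace ℝ (Fin d) × EuclideanSpace ℝ (Fin d),
        p z.1 * q z.2 z.1 *
          ‖gradient (fun y => Real.log (q y z.1)) z.2 + g₁ z.2‖ ^ 2) -
      (∫ z : EuclideanSpace ℝ (Fin d) × EuclideanSpace ℝ (Fin d),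
        p z.1 * q z.2 z.1 *
          ‖gradient (fun y => Real.log (q y z.1)) z.2 + g₂ z.2‖ ^ 2) := by
  have hint : ∀ y, Integrable (fun x => q y x * p x) := by
    intro y
    by_contra h
    have h0 := hp0_pos y
    rw [hp0_def, integral_undef h] at h0
    exact lt_irrefl _ h0
  rw [← integral_sub hSM₁ hSM₂, ← integral_sub hDSM₁ hDSM₂, Measure.volume_eq_prod,
    integral_prod_symm _ (by rw [← Measure.volume_eq_prod]; exact hDSM₁.sub hDSM₂)]
  refine integral_congr_ae ?_
  rw [Measure.volume_eq_prod] at hDSM₁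
  filter_upwards [hDSM₁.prod_left_ae] with y h1
  have hr : Integrable (fun x => p x * q y x) := by
    simpa only [mul_comm] using hint y
  have hr0 : ∫ x, p x * q y x = p0 y := by
    rw [hp0_def]
    simp only [mul_comm]
  have hrs : ∀ x, p x • gradient (fun y => q y x) y =
      (p x * q y x) • gradient (fun y => Real.log (q y x)) y := by
    intro x
    rw [gradient_log (hq_diff x y) (hq_pos y x).ne', smul_smul, mul_assoc,
      mul_inv_cancel₀ (hq_pos y x).ne', mul_one]
  have hmeas := aestronglyMeasurable_smul_gradient hq_diff
    (fun y => (hint y).aestronglyMeasurable) y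
  have hgrad := (hp0_grad y).gradient
  simp only [hrs] at hmeas hgrad
  have hrsi := integrable_smul_of_integrable_mul_norm_sq (g₁ y)
    (fun x => mul_nonneg (hp_nonneg x) (hq_pos y x).le) hr hmeas h1
  have hS : p0 y • gradient (fun y => Real.log (p0 y)) y =
      ∫ x, (p x * q y x) • gradient (fun y => Real.log (q y x)) y := by
    rw [gradient_log (hp0_grad y).differentiableAt (hp0_pos y).ne',
      smul_inv_smul₀ (hp0_pos y).ne', hgrad]
  have hpt : ∀ x, p x * q y x * ‖gradient (fun y => Real.log (q y x)) y + g₁ y‖ ^ 2 -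
      p x * q y x * ‖gradient (fun y => Real.log (q y x)) y + g₂ y‖ ^ 2 =
      2 * inner ℝ (g₁ y - g₂ y) ((p x * q y x) • gradient (fun y => Real.log (q y x)) y) +
        p x * q y x * (‖g₁ y‖ ^ 2 - ‖g₂ y‖ ^ 2) := by
    intro x
    rw [← mul_sub, norm_add_sq_sub_norm_add_sq, inner_smul_right]
    ring
  simp only [hpt]
  rw [integral_add ((hrsi.const_inner _).const_mul 2) (hr.mul_const _), integral_const_mul,
    integral_inner hrsi, integral_mul_const, hr0, ← hS, inner_smul_right, ← mul_sub,
    norm_add_sq_sub_norm_add_sq]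
  ring
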